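/- Let p and q be integers with 4 < p ≤ q and p not dividing q; write q = kp + r with 0 < r < p, and set m = gcd(p,q) and ν = (p−1)(q−1). Then every integer n with (p−1)(kp−1) ≤ n ≤ ν is attainable from T = {(p,0),(0,q)}, with the possible exception of: integers n with ν − m < n < ν, in case p is odd or r ≠ p−1; and the single integer n = ν − p, in case p is even and r = p−1. -/

import Mathlib

open Pointwise MeasureTheory

/-- The Newton polyhedron `Γ₊(T)`: the Minkowski sum of the convex hull of the
(real images of the) lattice points of `T` with the nonnegative quadrant. -/
noncomputable def GammaPlus (T : Finset (ℕ × ℕ)) : Set (ℝ × ℝ) :=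
  convexHull ℝ ((fun v : ℕ × ℕ => ((v.1 : ℝ), (v.2 : ℝ))) '' (T : Set (ℕ × ℕ))) +
    {v : ℝ × ℝ | 0 ≤ v.1 ∧ 0 ≤ v.2}

/-- `a(T)`: the smallest `x` with `(x,0) ∈ Γ₊(T)`. -/
noncomputable def axisA (T : Finset (ℕ × ℕ)) : ℝ :=
  sInf {x : ℝ | (x, (0 : ℝ)) ∈ GammaPlus T}

/-- `b(T)`: the smallest `y` with `(0,y) ∈ Γ₊(T)`. -/
noncomputable def axisB (T : Finset (ℕ × ℕ)) : ℝ :=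
  sInf {y : ℝ | ((0 : ℝ), y) ∈ GammaPlus T}

/-- `S(T)`: the Lebesgue area of the part of the nonnegative quadrant not in `Γ₊(T)`. -/
noncomputable def areaS (T : Finset (ℕ × ℕ)) : ℝ :=
  (volume ({v : ℝ × ℝ | 0 ≤ v.1 ∧ 0 ≤ v.2} \ GammaPlus T)).toReal

/-- The Newton number `ν(T) = 2 S(T) - a(T) - b(T) + 1`. -/
noncomputable def newtonNumber (T : Finset (ℕ × ℕ)) : ℝ :=
  2 * areaS T - axisA T - axisB T + 1

/-- An integer `n` is attainable from `T` if `n = ν(T ∪ P)` for some finite `P ⊆ ℕ²`. -/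
def Attainable (T : Finset (ℕ × ℕ)) (n : ℤ) : Prop :=
  ∃ P : Finset (ℕ × ℕ), (n : ℝ) = newtonNumber (T ∪ P)


/-- signed double area -/
def crR (a b c : ℝ × ℝ) : ℝ := (a.2 - c.2) * (b.1 - a.1) + (b.2 - a.2) * (c.1 - a.1)

lemma convex_halfplane (a b c : ℝ) : Convex ℝ {v : ℝ × ℝ | 0 ≤ a * v.1 + b * v.2 + c} := by
  intro x hx y hy s t hs ht hst
  simp only [Set.mem_ofPred_eq, Prod.fst_add, Prod.snd_add, Prod.smul_fst, Prod.smul_snd, smul_eq_mul] at *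
  have h1 := mul_nonneg hs hx
  have h2 := mul_nonneg ht hy
  have : c = s * c + t * c := by rw [← add_mul, hst, one_mul]
  nlinarith

/-- linear map with columns `u`, `w` -/
noncomputable def linUW (u w : ℝ × ℝ) : (ℝ × ℝ) →ₗ[ℝ] (ℝ × ℝ) :=
  Matrix.toLin (Module.Basis.finTwoProd ℝ) (Module.Basis.finTwoProd ℝ) !![u.1, w.1; u.2, w.2]

lemma linUW_apply (u w v : ℝ × ℝ) : linUW u w v = (u.1 * v.1 + w.1 * v.2, u.2 * v.1 + w.2 * v.2) := by
  unfold linUW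
  rw [Matrix.toLin_finTwoProd_apply]

lemma linUW_det (u w : ℝ × ℝ) : LinearMap.det (linUW u w) = u.1 * w.2 - w.1 * u.2 := by
  unfold linUW
  rw [LinearMap.det_toLin, Matrix.det_fin_two_of]

lemma vol_segment (P Q : ℝ × ℝ) : volume (segment ℝ P Q) = 0 := by
  have hsub : segment ℝ P Q ⊆ (fun v => P + v) '' (linUW (Q - P) 0 '' Set.univ) := by
    rw [segment_eq_image']
    rintro _ ⟨t, ht, rfl⟩
    refine ⟨t • (Q - P), ⟨(t, 0), trivial, ?_⟩, rfl⟩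
    rw [linUW_apply]
    ext <;> simp <;> ring
  refine measure_mono_null hsub ?_
  rw [Set.image_add_left, measure_preimage_add, Measure.addHaar_image_linearMap, linUW_det]
  simp

lemma vol_std : volume {v : ℝ × ℝ | 0 ≤ v.1 ∧ 0 ≤ v.2 ∧ v.1 + v.2 < 1} = ENNReal.ofReal (1/2) := by
  have hm : MeasurableSet {v : ℝ × ℝ | 0 ≤ v.1 ∧ 0 ≤ v.2 ∧ v.1 + v.2 < 1} := by
    refine (measurableSet_le measurable_const measurable_fst).inter
      ((measurableSet_le measurable_const measurable_snd).inter
        (measurableSet_lt (measurable_fst.add measurable_snd) measurable_const))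
  rw [Measure.volume_eq_prod, Measure.prod_apply hm]
  have : ∀ x : ℝ, volume (Prod.mk x ⁻¹' {v : ℝ × ℝ | 0 ≤ v.1 ∧ 0 ≤ v.2 ∧ v.1 + v.2 < 1})
      = (Set.Icc (0:ℝ) 1).indicator (fun x => ENNReal.ofReal (1 - x)) x := by
    intro x
    by_cases hx : x ∈ Set.Icc (0:ℝ) 1
    · rw [Set.indicator_of_mem hx]
      have : Prod.mk x ⁻¹' {v : ℝ × ℝ | 0 ≤ v.1 ∧ 0 ≤ v.2 ∧ v.1 + v.2 < 1} = Set.Ico 0 (1 - x) := by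
        ext y
        simp only [Set.mem_preimage, Set.mem_ofPred_eq, Set.mem_Ico]
        have := hx.1
        constructor
        · rintro ⟨h1, h2, h3⟩; exact ⟨h2, by linarith⟩
        · rintro ⟨h1, h2⟩; exact ⟨this, h1, by linarith⟩
      rw [this, Real.volume_Ico, sub_zero]
    · rw [Set.indicator_of_notMem hx]
      have : Prod.mk x ⁻¹' {v : ℝ × ℝ | 0 ≤ v.1 ∧ 0 ≤ v.2 ∧ v.1 + v.2 < 1} = ∅ := by
        ext y
        simp only [Set.mem_preimage, Set.mem_ofPred_eq, Set.mem_empty_iff_false, iff_false]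
        rintro ⟨h1, h2, h3⟩
        exact hx ⟨h1, by linarith⟩
      rw [this, measure_empty]
  simp_rw [this]
  rw [lintegral_indicator measurableSet_Icc, ← ofReal_integral_eq_lintegral_ofReal]
  · congr 1
    rw [integral_Icc_eq_integral_Ioc, ← intervalIntegral.integral_of_le zero_le_one]
    rw [intervalIntegral.integral_sub (by simp) (by simp), integral_id]
    norm_num
  · exact (continuous_const.sub continuous_id).continuousOn.integrableOn_Icc
  · filter_upwards [self_mem_ae_restrict measurableSet_Icc] with x hx
    have := hx.2
    simp
    linarith

lemma vol_tri (N E1 E2 : ℝ × ℝ) (hT : 0 < crR N E1 E2) :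
    volume {v : ℝ × ℝ | 0 < crR v E1 E2 ∧ 0 ≤ crR N v E2 ∧ 0 ≤ crR N E1 v} =
      ENNReal.ofReal (crR N E1 E2 / 2) := by
  have hset : {v : ℝ × ℝ | 0 < crR v E1 E2 ∧ 0 ≤ crR N v E2 ∧ 0 ≤ crR N E1 v} =
      (fun v => N + v) '' (linUW (E1 - N) (E2 - N) ''
        {v : ℝ × ℝ | 0 ≤ v.1 ∧ 0 ≤ v.2 ∧ v.1 + v.2 < 1}) := by
    have hT0 := hT.ne'
    ext v
    constructor
    · rintro ⟨h1, h2, h3⟩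
      refine ⟨v - N, ⟨(crR N v E2 / crR N E1 E2, crR N E1 v / crR N E1 E2), ⟨?_, ?_, ?_⟩, ?_⟩, by simp⟩
      · positivity
      · positivity
      · simp only
        rw [← add_div, div_lt_one hT]
        have : crR v E1 E2 + crR N v E2 + crR N E1 v = crR N E1 E2 := by unfold crR; ring
        linarith
      · rw [linUW_apply]
        ext
        · simp only [Prod.fst_sub]
          field_simp
          unfold crR; ring
        · simp only [Prod.snd_sub]
          field_simp
          unfold crR; ring
    · rintro ⟨_, ⟨⟨a, b⟩, ⟨ha, hb, hab⟩, rfl⟩, rfl⟩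
      simp only at ha hb hab
      rw [linUW_apply]
      simp only
      have e1 : crR (N + ((E1 - N).1 * a + (E2 - N).1 * b, (E1 - N).2 * a + (E2 - N).2 * b)) E1 E2
        = (1 - a - b) * crR N E1 E2 := by simp [crR]; ring
      have e2 : crR N (N + ((E1 - N).1 * a + (E2 - N).1 * b, (E1 - N).2 * a + (E2 - N).2 * b)) E2
        = a * crR N E1 E2 := by simp [crR]; ring
      have e3 : crR N E1 (N + ((E1 - N).1 * a + (E2 - N).1 * b, (E1 - N).2 * a + (E2 - N).2 * b))
        = b * crR N E1 E2 := by simp [crR]; ring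
      refine ⟨?_, ?_, ?_⟩
      · rw [e1]; exact mul_pos (by linarith) hT
      · rw [e2]; positivity
      · rw [e3]; positivity
  rw [hset, Set.image_add_left, measure_preimage_add, Measure.addHaar_image_linearMap, linUW_det, vol_std,
    ← ENNReal.ofReal_mul (abs_nonneg _)]
  have : (E1 - N).1 * (E2 - N).2 - (E2 - N).1 * (E1 - N).2 = - crR N E1 E2 := by simp [crR]; ring
  rw [this, abs_neg, abs_of_pos hT]
  congr 1; ring

lemma vol_insert (K : Set (ℝ × ℝ)) (hK : Convex ℝ K) (N E1 E2 : ℝ × ℝ) (h1 : E1 ∈ K) (h2 : E2 ∈ K)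
    (hT : 0 < crR N E1 E2)
    (hw : ∀ v ∈ K, crR v E1 E2 ≤ 0 ∧ 0 ≤ crR N v E2 ∧ 0 ≤ crR N E1 v) :
    volume (convexHull ℝ (insert N K)) = volume K + ENNReal.ofReal (crR N E1 E2 / 2) := by
  set Tr := {v : ℝ × ℝ | 0 < crR v E1 E2 ∧ 0 ≤ crR N v E2 ∧ 0 ≤ crR N E1 v} with hTr
  have hTm : MeasurableSet Tr := by
    refine MeasurableSet.inter (s₁ := {v | 0 < crR v E1 E2}) ?_
      (MeasurableSet.inter (s₁ := {v | 0 ≤ crR N v E2}) (s₂ := {v | 0 ≤ crR N E1 v}) ?_ ?_)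
    · exact measurableSet_lt measurable_const (by unfold crR; fun_prop)
    · exact measurableSet_le measurable_const (by unfold crR; fun_prop)
    · exact measurableSet_le measurable_const (by unfold crR; fun_prop)
  have hdis : Disjoint K Tr := by
    rw [Set.disjoint_left]
    intro v hv hv2
    exact absurd hv2.1 (not_lt.mpr (hw v hv).1)
  have hEq : convexHull ℝ (insert N K) = K ∪ Tr := by
    apply subset_antisymm
    · intro y hy
      rw [convexHull_insert ⟨E1, h1⟩, hK.convexHull_eq] at hy
      rw [mem_convexJoin] at hy
      obtain ⟨n', hn', k, hk, hy⟩ := hy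
      rw [Set.mem_singleton_iff] at hn'
      subst hn'
      obtain ⟨a, b, ha, hb, hab, rfl⟩ := hy
      obtain ⟨w1, w2, w3⟩ := hw k hk
      have ha' : a = 1 - b := by linarith
      have e1 : crR (a • n' + b • k) E1 E2 = a * crR n' E1 E2 + b * crR k E1 E2 := by
        subst ha'; simp [crR]; ring
      have e2 : crR n' (a • n' + b • k) E2 = b * crR n' k E2 := by
        subst ha'; simp [crR]; ring
      have e3 : crR n' E1 (a • n' + b • k) = b * crR n' E1 k := by
        subst ha'; simp [crR]; ring
      by_cases hpos : 0 < crR (a • n' + b • k) E1 E2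
      · right
        exact ⟨hpos, by rw [e2]; positivity, by rw [e3]; positivity⟩
      · left
        push Not at hpos
        set T := crR n' E1 E2 with hTdef
        set c := crR k E1 E2 with hc
        have hTc : 0 < T - c := by linarith
        have hsum : c + crR n' k E2 + crR n' E1 k = T := by simp [hc, hTdef, crR]; ring
        have he : (crR n' k E2 / (T - c)) • E1 + (crR n' E1 k / (T - c)) • E2 ∈ K := by
          apply hK h1 h2
          · positivity
          · positivity
          · rw [← add_div, div_eq_one_iff_eq hTc.ne']; linarith
        have hlam : a * T + b * c ≤ 0 := by rw [← e1]; exact hpos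
        rcases w1.lt_or_eq with hc0 | hc0
        · have hc1 : 0 < -c := by linarith
          have hθ0 : 0 ≤ a * (T - c) / (-c) := by positivity
          have hθ : a * (T - c) / (-c) ≤ 1 := by
            rw [div_le_one hc1]; subst ha'; nlinarith
          have hx : (T • k) = c • n' + (crR n' k E2) • E1 + (crR n' E1 k) • E2 := by
            ext <;> simp [hc, hTdef, crR] <;> ring
          have hfin := hK he hk hθ0 (sub_nonneg.mpr hθ) (by ring)
          convert hfin using 1
          have hx1 := congrArg Prod.fst hx
          have hx2 := congrArg Prod.snd hx
          have hc2 := hc0.ne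
          have hTc2 := hTc.ne'
          ext
          · simp only [Prod.fst_add, Prod.smul_fst, smul_eq_mul] at hx1 ⊢
            field_simp
            subst ha'
            linear_combination (-(1 - b)) * hx1
          · simp only [Prod.snd_add, Prod.smul_snd, smul_eq_mul] at hx2 ⊢
            field_simp
            subst ha'
            linear_combination (-(1 - b)) * hx2
        · have ha0 : a = 0 := by
            rw [hc0] at hlam
            by_contra h
            have : 0 < a := lt_of_le_of_ne ha (Ne.symm h)
            have := mul_pos this hT
            linarith
          have hb1 : b = 1 := by linarith
          rw [ha0, hb1]; simpa using hk
    · apply Set.union_subset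
      · exact (Set.subset_insert _ _).trans (subset_convexHull ℝ _)
      · rintro v ⟨v1, v2, v3⟩
        have hsum : crR v E1 E2 + crR N v E2 + crR N E1 v = crR N E1 E2 := by unfold crR; ring
        have : v = (crR v E1 E2 / crR N E1 E2) • N + (crR N v E2 / crR N E1 E2) • E1
            + (crR N E1 v / crR N E1 E2) • E2 := by
          have hT0 := hT.ne'
          ext
          · simp only [Prod.fst_add, Prod.smul_fst, smul_eq_mul]
            field_simp
            unfold crR; ring
          · simp only [Prod.snd_add, Prod.smul_snd, smul_eq_mul]
            field_simp
            unfold crR; ring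
        rw [this]
        have hc := convex_convexHull ℝ (insert N K)
        have := hc.sum_mem (t := (Finset.univ : Finset (Fin 3)))
          (w := ![crR v E1 E2 / crR N E1 E2, crR N v E2 / crR N E1 E2, crR N E1 v / crR N E1 E2])
          (z := ![N, E1, E2]) ?_ ?_ ?_
        · simpa [Fin.sum_univ_three] using this
        · intro i _
          fin_cases i <;> simp <;> positivity
        · simp [Fin.sum_univ_three]
          rw [← add_div, ← add_div, hsum, div_self hT.ne']
        · intro i _
          apply subset_convexHull
          fin_cases i
          · simp
          · right; exact h1
          · right; exact h2
  rw [hEq, measure_union hdis hTm, vol_tri N E1 E2 hT]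

/-- real image of an integer point -/
def iR (v : ℤ × ℤ) : ℝ × ℝ := ((v.1 : ℝ), (v.2 : ℝ))

/-- integer signed double area -/
def crZ (a b c : ℤ × ℤ) : ℤ := (a.2 - c.2) * (b.1 - a.1) + (b.2 - a.2) * (c.1 - a.1)

lemma crR_iR (a b c : ℤ × ℤ) : crR (iR a) (iR b) (iR c) = (crZ a b c : ℝ) := by
  simp [crR, crZ, iR]

lemma crR_cyc (a b c : ℝ × ℝ) : crR a b c = crR b c a := by unfold crR; ring
lemma crR_swap (a b c : ℝ × ℝ) : crR a b c = - crR b a c := by unfold crR; ring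
lemma crZ_cyc (a b c : ℤ × ℤ) : crZ a b c = crZ b c a := by unfold crZ; ring
lemma crZ_swap (a b c : ℤ × ℤ) : crZ a b c = - crZ b a c := by unfold crZ; ring

lemma hull_half (A B : ℝ × ℝ) (s : Set (ℝ × ℝ)) (h : ∀ v ∈ s, 0 ≤ crR A B v) :
    ∀ v ∈ convexHull ℝ s, 0 ≤ crR A B v := by
  have hc := convex_halfplane (B.2 - A.2) (-(B.1 - A.1)) (A.2 * (B.1 - A.1) - (B.2 - A.2) * A.1)
  have he : {v : ℝ × ℝ | 0 ≤ (B.2 - A.2) * v.1 + (-(B.1 - A.1)) * v.2 +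
      (A.2 * (B.1 - A.1) - (B.2 - A.2) * A.1)} = {v | 0 ≤ crR A B v} := by
    ext v
    have : (B.2 - A.2) * v.1 + (-(B.1 - A.1)) * v.2 +
      (A.2 * (B.1 - A.1) - (B.2 - A.2) * A.1) = crR A B v := by unfold crR; ring
    simp only [Set.mem_ofPred_eq, this]
  rw [he] at hc
  exact fun v hv => convexHull_min (t := {v | 0 ≤ crR A B v}) h hc hv

/-- point set of a chain -/
def ptsZ (P Q : ℤ × ℤ) (S : Finset (ℤ × ℤ)) : Set (ℝ × ℝ) := iR '' {v | v = P ∨ v = Q ∨ v ∈ S}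

/-- the hull of `P`, `Q`, `S` lies below the segment `PQ`, and has double area `D` -/
def HullD (P Q : ℤ × ℤ) (S : Finset (ℤ × ℤ)) (D : ℤ) : Prop :=
  (∀ v ∈ S, P.1 < v.1 ∧ v.1 < Q.1 ∧ 0 ≤ crZ P Q v ∧ crZ P Q v ≤ D) ∧
    volume (convexHull ℝ (ptsZ P Q S)) = ENNReal.ofReal ((D : ℝ) / 2)

lemma hullD_empty (P Q : ℤ × ℤ) : HullD P Q ∅ 0 := by
  refine ⟨by simp, ?_⟩
  have : ptsZ P Q ∅ = {iR P, iR Q} := by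
    unfold ptsZ
    ext v
    simp [eq_comm]
  rw [this, convexHull_pair, vol_segment]
  simp

lemma hull_insert_hull (N : ℝ × ℝ) (s : Set (ℝ × ℝ)) :
    convexHull ℝ (insert N (convexHull ℝ s)) = convexHull ℝ (insert N s) := by
  rw [Set.insert_eq, convexHull_convexHull_union_right, ← Set.insert_eq]

lemma glue_right (P C Q : ℤ × ℤ) (S : Finset (ℤ × ℤ)) (D e : ℤ) (hD : 0 ≤ D)
    (h : HullD P C S D) (h1 : P.1 < C.1) (h2 : C.1 < Q.1) (he : e = crZ P Q C) (he0 : 0 < e)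
    (hcv : ∀ v ∈ S, crZ C Q v ≤ 0) : HullD P Q (insert C S) (D + e) := by
  obtain ⟨hS, hvol⟩ := h
  have hup : ∀ v ∈ S, 0 ≤ crZ P Q v ∧ crZ P Q v ≤ D + e := by
    intro v hv
    obtain ⟨a1, a2, a3, a4⟩ := hS v hv
    have i1 : crZ P Q v = crZ P C v + crZ C Q v + crZ P Q C := by unfold crZ; ring
    have i2 : (C.1 - P.1) * crZ P Q v = (Q.1 - P.1) * crZ P C v + (v.1 - P.1) * crZ P Q C := by
      unfold crZ; ring
    have := hcv v hv
    constructor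
    · by_contra hneg
      push Not at hneg
      have j1 : (C.1 - P.1) * crZ P Q v < 0 := mul_neg_of_pos_of_neg (by linarith) hneg
      have j2 : 0 ≤ (Q.1 - P.1) * crZ P C v := mul_nonneg (by linarith) a3
      have j3 : 0 ≤ (v.1 - P.1) * crZ P Q C := mul_nonneg (by linarith) (by linarith)
      linarith
    · linarith
  refine ⟨?_, ?_⟩
  · intro v hv
    rw [Finset.mem_insert] at hv
    rcases hv with rfl | hv
    · exact ⟨h1, h2, by linarith, by linarith⟩
    · obtain ⟨a1, a2, a3, a4⟩ := hS v hv
      exact ⟨a1, a2.trans h2, (hup v hv).1, (hup v hv).2⟩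
  · have hset : ptsZ P Q (insert C S) = insert (iR Q) (ptsZ P C S) := by
      unfold ptsZ
      rw [← Set.image_insert_eq]
      congr 1
      ext v
      simp only [Set.mem_insert_iff, Set.mem_ofPred_eq, Finset.mem_insert]
      tauto
    rw [hset, ← hull_insert_hull, vol_insert _ (convex_convexHull ℝ _) (iR Q) (iR C) (iR P), hvol]
    · have : crR (iR Q) (iR C) (iR P) = (e : ℝ) := by
        rw [crR_iR, crZ_cyc, crZ_cyc, he]
      rw [this, ← ENNReal.ofReal_add]
      · congr 1; push_cast; ring
      · have : (0:ℝ) ≤ D := by exact_mod_cast hD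
        positivity
      · have : (0:ℝ) < e := by exact_mod_cast he0
        positivity
    · exact subset_convexHull ℝ _ ⟨C, by simp, rfl⟩
    · exact subset_convexHull ℝ _ ⟨P, by simp, rfl⟩
    · rw [crR_iR, crZ_cyc, crZ_cyc, ← he]; exact_mod_cast he0
    · intro v hv
      refine ⟨?_, ?_, ?_⟩
      · have := hull_half (iR P) (iR C) (ptsZ P C S) ?_ v hv
        · rw [crR_cyc, crR_swap]; linarith
        · rintro _ ⟨w, hw, rfl⟩
          rw [crR_iR]
          norm_cast
          rcases hw with rfl | rfl | hw
          · unfold crZ; nlinarith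
          · unfold crZ; nlinarith
          · exact (hS w hw).2.2.1
      · have := hull_half (iR P) (iR Q) (ptsZ P C S) ?_ v hv
        · rw [crR_cyc, crR_cyc]; linarith
        · rintro _ ⟨w, hw, rfl⟩
          rw [crR_iR]
          norm_cast
          rcases hw with rfl | rfl | hw
          · unfold crZ; nlinarith
          · linarith
          · exact (hup w hw).1
      · refine hull_half (iR Q) (iR C) (ptsZ P C S) ?_ v hv
        rintro _ ⟨w, hw, rfl⟩
        rw [crR_iR]
        norm_cast
        rcases hw with rfl | rfl | hw
        · rw [crZ_cyc, crZ_cyc]; linarith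
        · unfold crZ; nlinarith
        · rw [crZ_swap]; linarith [hcv w hw]

lemma glue_left (P A Q : ℤ × ℤ) (S : Finset (ℤ × ℤ)) (D e : ℤ) (hD : 0 ≤ D)
    (h : HullD A Q S D) (h1 : P.1 < A.1) (h2 : A.1 < Q.1) (he : e = crZ P Q A) (he0 : 0 < e)
    (hcv : ∀ v ∈ S, crZ P A v ≤ 0) : HullD P Q (insert A S) (D + e) := by
  obtain ⟨hS, hvol⟩ := h
  have hup : ∀ v ∈ S, 0 ≤ crZ P Q v ∧ crZ P Q v ≤ D + e := by
    intro v hv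
    obtain ⟨a1, a2, a3, a4⟩ := hS v hv
    have i1 : crZ P Q v = crZ A Q v + crZ P A v + crZ P Q A := by unfold crZ; ring
    have i2 : (Q.1 - A.1) * crZ P Q v = (Q.1 - P.1) * crZ A Q v + (Q.1 - v.1) * crZ P Q A := by
      unfold crZ; ring
    have := hcv v hv
    constructor
    · by_contra hneg
      push Not at hneg
      have j1 : (Q.1 - A.1) * crZ P Q v < 0 := mul_neg_of_pos_of_neg (by linarith) hneg
      have j2 : 0 ≤ (Q.1 - P.1) * crZ A Q v := mul_nonneg (by linarith) a3
      have j3 : 0 ≤ (Q.1 - v.1) * crZ P Q A := mul_nonneg (by linarith) (by linarith)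
      linarith
    · linarith
  refine ⟨?_, ?_⟩
  · intro v hv
    rw [Finset.mem_insert] at hv
    rcases hv with rfl | hv
    · exact ⟨h1, h2, by linarith, by linarith⟩
    · obtain ⟨a1, a2, a3, a4⟩ := hS v hv
      exact ⟨h1.trans a1, a2, (hup v hv).1, (hup v hv).2⟩
  · have hset : ptsZ P Q (insert A S) = insert (iR P) (ptsZ A Q S) := by
      unfold ptsZ
      rw [← Set.image_insert_eq]
      congr 1
      ext v
      simp only [Set.mem_insert_iff, Set.mem_ofPred_eq, Finset.mem_insert]
      tauto
    rw [hset, ← hull_insert_hull, vol_insert _ (convex_convexHull ℝ _) (iR P) (iR Q) (iR A), hvol]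
    · have : crR (iR P) (iR Q) (iR A) = (e : ℝ) := by
        rw [crR_iR, he]
      rw [this, ← ENNReal.ofReal_add]
      · congr 1; push_cast; ring
      · have : (0:ℝ) ≤ D := by exact_mod_cast hD
        positivity
      · have : (0:ℝ) < e := by exact_mod_cast he0
        positivity
    · exact subset_convexHull ℝ _ ⟨Q, by simp, rfl⟩
    · exact subset_convexHull ℝ _ ⟨A, by simp, rfl⟩
    · rw [crR_iR, ← he]; exact_mod_cast he0
    · intro v hv
      refine ⟨?_, ?_, ?_⟩
      · have := hull_half (iR A) (iR Q) (ptsZ A Q S) ?_ v hv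
        · rw [crR_cyc, crR_swap]; linarith
        · rintro _ ⟨w, hw, rfl⟩
          rw [crR_iR]
          norm_cast
          rcases hw with rfl | rfl | hw
          · unfold crZ; nlinarith
          · unfold crZ; nlinarith
          · exact (hS w hw).2.2.1
      · have := hull_half (iR A) (iR P) (ptsZ A Q S) ?_ v hv
        · rw [crR_cyc, crR_cyc]; linarith
        · rintro _ ⟨w, hw, rfl⟩
          rw [crR_iR]
          norm_cast
          rcases hw with rfl | rfl | hw
          · unfold crZ; nlinarith
          · rw [crZ_cyc]; linarith
          · rw [crZ_swap]; linarith [hcv w hw]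
      · refine hull_half (iR P) (iR Q) (ptsZ A Q S) ?_ v hv
        rintro _ ⟨w, hw, rfl⟩
        rw [crR_iR]
        norm_cast
        rcases hw with rfl | rfl | hw
        · linarith
        · unfold crZ; nlinarith
        · exact (hup w hw).1

lemma levvec (p0 e0 D : ℤ) (hc : IsCoprime p0 e0) (h0 : 0 < D) (h1 : D < p0) :
    ∃ b1 b2 : ℤ, 0 < b1 ∧ b1 < p0 ∧ e0 * b1 - p0 * b2 = D := by
  obtain ⟨u, w, huw⟩ := hc
  have hp : 0 < p0 := by linarith
  have hmod := Int.emod_add_mul_ediv (D * w) p0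
  have hb0 := Int.emod_nonneg (D * w) hp.ne'
  have hb1 := Int.emod_lt_of_pos (D * w) hp
  set b1 := (D * w) % p0 with hb
  set z := (D * w) / p0
  have hlev : e0 * b1 - p0 * (- D * u - e0 * z) = D := by
    linear_combination e0 * hmod + D * huw
  refine ⟨b1, - D * u - e0 * z, ?_, hb1, hlev⟩
  rcases hb0.lt_or_eq with h | h
  · exact h
  · exfalso
    rw [← h] at hlev
    have hdvd : p0 ∣ D := ⟨-(- D * u - e0 * z), by linarith⟩
    have := Int.le_of_dvd h0 hdvd
    linarith

lemma farey (p0 e0 : ℤ) (hc : IsCoprime p0 e0) (t : ℕ) (h1 : 1 ≤ t) (ht : (t : ℤ) < p0) :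
    ∃ a1 a2 g1 g2 : ℤ, 0 < a1 ∧ g1 < 0 ∧ 1 ≤ e0 * a1 - p0 * a2 ∧ 1 ≤ e0 * g1 - p0 * g2 ∧
      a1 * g2 - a2 * g1 = -1 ∧ e0 * a1 - p0 * a2 ≤ t ∧ e0 * g1 - p0 * g2 ≤ t ∧
      (t : ℤ) + 1 ≤ (e0 * a1 - p0 * a2) + (e0 * g1 - p0 * g2) := by
  induction t, h1 using Nat.le_induction with
  | base =>
    obtain ⟨b1, b2, k1, k2, k3⟩ := levvec p0 e0 1 hc one_pos (by exact_mod_cast ht)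
    have k4 : e0 * (b1 - p0) - p0 * (b2 - e0) = 1 := by linarith
    refine ⟨b1, b2, b1 - p0, b2 - e0, k1, by linarith, by rw [k3], by rw [k4], by linarith, ?_, ?_, ?_⟩
    · rw [k3]; simp
    · rw [k4]; simp
    · rw [k3, k4]; simp
  | succ t ht1 ih =>
    push_cast at ht ⊢
    obtain ⟨a1, a2, g1, g2, ha, hg, s0, s1, hdet, l0, l1, hs⟩ := ih (by linarith)
    by_cases hbig : (t : ℤ) + 2 ≤ (e0 * a1 - p0 * a2) + (e0 * g1 - p0 * g2)
    · exact ⟨a1, a2, g1, g2, ha, hg, s0, s1, hdet, by linarith, by linarith, by linarith⟩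
    · have heq : (e0 * a1 - p0 * a2) + (e0 * g1 - p0 * g2) = t + 1 := by
        push Not at hbig; linarith
      have hmu : e0 * (a1 + g1) - p0 * (a2 + g2) = t + 1 := by linarith
      rcases lt_trichotomy (a1 + g1) 0 with h | h | h
      · refine ⟨a1, a2, a1 + g1, a2 + g2, ha, h, s0, by rw [hmu]; linarith, by linarith, by linarith,
          by rw [hmu], by rw [hmu]; linarith⟩
      · exfalso
        rw [h] at hmu
        have hdvd : p0 ∣ (t : ℤ) + 1 := ⟨-(a2 + g2), by linarith⟩
        have := Int.le_of_dvd (by positivity) hdvd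
        linarith
      · refine ⟨a1 + g1, a2 + g2, g1, g2, h, hg, by rw [hmu]; linarith, s1, by linarith,
          by rw [hmu], by linarith, by rw [hmu]; linarith⟩

lemma gcd_aux (g m s s' D : ℤ) (hm : 2 ≤ m) (hg : 0 ≤ g) (hd1 : g ∣ s) (hd2 : g ∣ m * s' - 1)
    (hss : s ≤ s') (hD : m * s' ≤ D) :
    D - m * s = 0 ∨ g ≤ D - m * s := by
  by_contra hcon
  push Not at hcon
  obtain ⟨c1, c2⟩ := hcon
  have hdw : g ∣ m * (s' - s) - 1 := by
    have := dvd_sub hd2 (hd1.mul_left m)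
    have hE : m * (s' - s) - 1 = m * s' - 1 - m * s := by ring
    rw [hE]; exact this
  rcases hss.lt_or_eq with h | h
  · have hw : 1 ≤ m * (s' - s) - 1 := by nlinarith
    have := Int.le_of_dvd (by linarith) hdw
    linarith
  · subst h
    have h1 : g ∣ 1 := by
      have : g ∣ -1 := by simpa using hdw
      exact (dvd_neg).mp this
    have h2 := Int.le_of_dvd one_pos h1
    have : 0 ≤ D - m * s := by linarith
    omega

lemma strip (N : ℕ) : ∀ (D : ℤ) (P Q : ℤ × ℤ), D ≤ N → P.1 < Q.1 → 0 ≤ D →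
    (D = 0 ∨ (Int.gcd (Q.1 - P.1) (Q.2 - P.2) : ℤ) ≤ D) → D ≤ Q.1 - P.1 - 1 →
    ∃ S, HullD P Q S D := by
  induction N with
  | zero =>
    intro D P Q hN _ h0 _ _
    have : D = 0 := by simp at hN; linarith
    subst this
    exact ⟨∅, hullD_empty P Q⟩
  | succ N ih =>
    rintro D ⟨x, y⟩ ⟨x', y'⟩ hN hn h0 hg hD
    rcases hg with rfl | hg
    · exact ⟨∅, hullD_empty _ _⟩
    simp only at hn hg hD
    have hgpos : 0 < Int.gcd (x' - x) (y' - y) := Int.gcd_pos_of_ne_zero_left _ (by linarith)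
    obtain ⟨p0, e0, hcop, hp0, he0⟩ := Int.exists_gcd_one hgpos
    rw [← Int.isCoprime_iff_gcd_eq_one] at hcop
    obtain ⟨m, hm⟩ : ∃ m : ℤ, m = (Int.gcd (x' - x) (y' - y) : ℤ) := ⟨_, rfl⟩
    rw [← hm] at hp0 he0 hg
    have hmpos : 0 < m := by rw [hm]; exact_mod_cast hgpos
    clear hm hgpos
    obtain rfl : x' = x + m * p0 := by linarith
    obtain rfl : y' = y + m * e0 := by linarith
    push_cast at hN
    have hDpos : 0 < D := by linarith
    have hp0pos : 0 < p0 := by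
      by_contra h
      push Not at h
      nlinarith
    rcases (show 1 ≤ m from hmpos).lt_or_eq with hm2 | rfl
    swap
    · obtain ⟨b1, b2, k1, k2, k3⟩ := levvec p0 e0 D hcop hDpos (by linarith)
      refine ⟨_, by
        simpa using glue_right (x, y) (x + b1, y + b2) (x + 1 * p0, y + 1 * e0) ∅ 0 D le_rfl
          (hullD_empty _ _) (by simpa using k1) (by simpa using k2)
          (by simp only [crZ]; linear_combination - k3) hDpos (by simp)⟩
    have hm2' : 2 ≤ m := hm2
    have hdm := Int.emod_add_mul_ediv D m
    have hdm0 := Int.emod_nonneg D hmpos.ne'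
    have hdm1 := Int.emod_lt_of_pos D hmpos
    have ht1 : 1 ≤ D / m := by
      rw [Int.le_ediv_iff_mul_le hmpos]; linarith
    have htp : D / m < p0 := by
      rw [Int.ediv_lt_iff_lt_mul hmpos]; linarith
    obtain ⟨t, ht⟩ : ∃ t : ℕ, (t : ℤ) = D / m := ⟨(D / m).toNat, Int.toNat_of_nonneg (by linarith)⟩
    rw [← ht] at ht1 htp hdm
    obtain ⟨a1, a2, g1, g2, ha, hgn, hs0, hs1, hdet, l0, l1, hs⟩ :=
      farey p0 e0 hcop t (by exact_mod_cast ht1) htp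
    obtain ⟨s0, es0⟩ : ∃ s0, s0 = e0 * a1 - p0 * a2 := ⟨_, rfl⟩
    obtain ⟨s1, es1⟩ : ∃ s1, s1 = e0 * g1 - p0 * g2 := ⟨_, rfl⟩
    rw [← es0] at hs0 l0 hs
    rw [← es1] at hs1 l1 hs
    have hp0e : p0 = s1 * a1 - s0 * g1 := by rw [es0, es1]; linear_combination p0 * hdet
    have hDlo : m * t ≤ D := by linarith
    have hDhi : D ≤ m * (s0 + s1) - 1 := by
      have : m * ((t : ℤ) + 1) ≤ m * (s0 + s1) := mul_le_mul_of_nonneg_left hs hmpos.le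
      linarith
    have hm0 : m * s0 ≤ D := (mul_le_mul_of_nonneg_left l0 hmpos.le).trans hDlo
    have hm1 : m * s1 ≤ D := (mul_le_mul_of_nonneg_left l1 hmpos.le).trans hDlo
    have hms0 : 0 < m * s0 := by positivity
    have hms1 : 0 < m * s1 := by positivity
    have hmp : p0 ≤ m * p0 := by nlinarith
    rcases le_or_gt s1 s0 with hle | hlt
    · have hb : -g1 ≤ p0 - s0 := by
        have w1 : 1 * 1 ≤ s1 * a1 := mul_le_mul hs1 ha zero_le_one (by linarith)
        have w2 : 1 * (-g1 - 1) ≤ s0 * (-g1 - 1) := mul_le_mul_of_nonneg_right hs0 (by linarith)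
        linarith
      have hb2 : -g1 ≤ m * (p0 - s0) := by
        have w1 : 1 * (p0 - s0) ≤ m * (p0 - s0) := mul_le_mul_of_nonneg_right hm2.le (by linarith)
        linarith
      obtain ⟨S, hS⟩ := ih (D - m * s1) (x, y) (x + m * p0 + g1, y + m * e0 + g2) (by linarith)
        (by simp only; linarith) (by linarith)
        (by
          simp only
          apply gcd_aux _ m s1 s0 D hm2' (by positivity) _ _ hle hm0
          · have d1 := Int.gcd_dvd_left (x + m * p0 + g1 - x) (y + m * e0 + g2 - y)
            have d2 := Int.gcd_dvd_right (x + m * p0 + g1 - x) (y + m * e0 + g2 - y)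
            have := dvd_sub (d1.mul_left e0) (d2.mul_left p0)
            have hE : s1 = e0 * (x + m * p0 + g1 - x) - p0 * (y + m * e0 + g2 - y) := by
              rw [es1]; ring
            rw [hE]; exact this
          · have d1 := Int.gcd_dvd_left (x + m * p0 + g1 - x) (y + m * e0 + g2 - y)
            have d2 := Int.gcd_dvd_right (x + m * p0 + g1 - x) (y + m * e0 + g2 - y)
            have := dvd_sub (d2.mul_left a1) (d1.mul_left a2)
            have hE : m * s0 - 1 = a1 * (y + m * e0 + g2 - y) - a2 * (x + m * p0 + g1 - x) := by
              rw [es0]; linear_combination - hdet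
            rw [hE]; exact this)
        (by simp only; linarith)
      suffices hcv : ∀ v ∈ S, crZ (x + m * p0 + g1, y + m * e0 + g2) (x + m * p0, y + m * e0) v ≤ 0 by
        refine ⟨insert (x + m * p0 + g1, y + m * e0 + g2) S, ?_⟩
        have := glue_right (x, y) (x + m * p0 + g1, y + m * e0 + g2) (x + m * p0, y + m * e0) S
          (D - m * s1) (m * s1) (by linarith) hS (by simp only; linarith) (by simp only; linarith)
          (by simp only [crZ]; rw [es1]; ring) hms1 hcv
        rwa [sub_add_cancel] at this
      rintro ⟨v1, v2⟩ hv
      obtain ⟨c1, c2, c3, c4⟩ := hS.1 _ hv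
      by_contra hcon
      push Not at hcon
      simp only at c1 c2
      obtain ⟨i, hi⟩ : ∃ i, i = (v2 - (y + m * e0)) * g1 - g2 * (v1 - (x + m * p0)) := ⟨_, rfl⟩
      obtain ⟨k, hk⟩ : ∃ k, k = (v1 - (x + m * p0)) * a2 - (v2 - (y + m * e0)) * a1 := ⟨_, rfl⟩
      have hi1 : crZ (x + m * p0 + g1, y + m * e0 + g2) (x + m * p0, y + m * e0) (v1, v2) = i := by
        simp only [crZ]; rw [hi]; ring
      rw [hi1] at hcon
      have hd1 : v1 - (x + m * p0) = i * a1 + k * g1 := by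
        rw [hi, hk]; linear_combination (v1 - (x + m * p0)) * hdet
      have hh : crZ (x, y) (x + m * p0 + g1, y + m * e0 + g2) (v1, v2) =
          i * (m * s0 - 1) + (k - 1) * (m * s1) := by
        have hd2 : v2 - (y + m * e0) = i * a2 + k * g2 := by
          rw [hi, hk]; linear_combination (v2 - (y + m * e0)) * hdet
        have q1 : v1 = x + m * p0 + i * a1 + k * g1 := by linarith
        have q2 : v2 = y + m * e0 + i * a2 + k * g2 := by linarith
        simp only [crZ]
        rw [q1, q2, es0, es1]
        linear_combination i * hdet
      have hk2 : 2 ≤ k := by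
        by_contra hk2
        have hk1 : 0 ≤ 1 - k := by linarith
        have w1 := mul_pos hcon ha
        have w2 := mul_nonneg hk1 (show 0 ≤ -g1 by linarith)
        linarith
      rw [hh] at c4
      have w1 : 1 * (m * s0 - 1) ≤ i * (m * s0 - 1) := mul_le_mul_of_nonneg_right hcon (by linarith)
      have w2 : 1 * (m * s1) ≤ (k - 1) * (m * s1) := mul_le_mul_of_nonneg_right (by linarith) hms1.le
      linarith
    · have hb : a1 ≤ p0 - s1 := by
        have w1 : 1 * 1 ≤ s0 * (-g1) := mul_le_mul hs0 (by linarith) zero_le_one (by linarith)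
        have w2 : 1 * (a1 - 1) ≤ s1 * (a1 - 1) := mul_le_mul_of_nonneg_right hs1 (by linarith)
        linarith
      have hb2 : a1 ≤ m * (p0 - s1) := by
        have w1 : 1 * (p0 - s1) ≤ m * (p0 - s1) := mul_le_mul_of_nonneg_right hm2.le (by linarith)
        linarith
      obtain ⟨S, hS⟩ := ih (D - m * s0) (x + a1, y + a2) (x + m * p0, y + m * e0) (by linarith)
        (by simp only; linarith) (by linarith)
        (by
          simp only
          apply gcd_aux _ m s0 s1 D hm2' (by positivity) _ _ hlt.le hm1
          · have d1 := Int.gcd_dvd_left (x + m * p0 - (x + a1)) (y + m * e0 - (y + a2))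
            have d2 := Int.gcd_dvd_right (x + m * p0 - (x + a1)) (y + m * e0 - (y + a2))
            have := dvd_sub (d2.mul_left p0) (d1.mul_left e0)
            have hE : s0 = p0 * (y + m * e0 - (y + a2)) - e0 * (x + m * p0 - (x + a1)) := by
              rw [es0]; ring
            rw [hE]; exact this
          · have d1 := Int.gcd_dvd_left (x + m * p0 - (x + a1)) (y + m * e0 - (y + a2))
            have d2 := Int.gcd_dvd_right (x + m * p0 - (x + a1)) (y + m * e0 - (y + a2))
            have := dvd_sub (d2.mul_left g1) (d1.mul_left g2)
            have hE : m * s1 - 1 = g1 * (y + m * e0 - (y + a2)) - g2 * (x + m * p0 - (x + a1)) := by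
              rw [es1]; linear_combination - hdet
            rw [hE]; exact this)
        (by simp only; linarith)
      suffices hcv : ∀ v ∈ S, crZ (x, y) (x + a1, y + a2) v ≤ 0 by
        refine ⟨insert (x + a1, y + a2) S, ?_⟩
        have := glue_left (x, y) (x + a1, y + a2) (x + m * p0, y + m * e0) S
          (D - m * s0) (m * s0) (by linarith) hS (by simp only; linarith) (by simp only; linarith)
          (by simp only [crZ]; rw [es0]; ring) hms0 hcv
        rwa [sub_add_cancel] at this
      rintro ⟨v1, v2⟩ hv
      obtain ⟨c1, c2, c3, c4⟩ := hS.1 _ hv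
      by_contra hcon
      push Not at hcon
      simp only at c1 c2
      obtain ⟨i, hi⟩ : ∃ i, i = (v2 - y) * g1 - g2 * (v1 - x) := ⟨_, rfl⟩
      obtain ⟨k, hk⟩ : ∃ k, k = (v1 - x) * a2 - (v2 - y) * a1 := ⟨_, rfl⟩
      have hi1 : crZ (x, y) (x + a1, y + a2) (v1, v2) = k := by
        simp only [crZ]; rw [hk]; ring
      rw [hi1] at hcon
      have hd1 : v1 - x = i * a1 + k * g1 := by
        rw [hi, hk]; linear_combination (v1 - x) * hdet
      have hh : crZ (x + a1, y + a2) (x + m * p0, y + m * e0) (v1, v2) =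
          (i - 1) * (m * s0) + k * (m * s1 - 1) := by
        have hd2 : v2 - y = i * a2 + k * g2 := by
          rw [hi, hk]; linear_combination (v2 - y) * hdet
        have q1 : v1 = x + i * a1 + k * g1 := by linarith
        have q2 : v2 = y + i * a2 + k * g2 := by linarith
        simp only [crZ]
        rw [q1, q2, es0, es1]
        linear_combination k * hdet
      have hk2 : 2 ≤ i := by
        by_contra hk2
        have hk1 : 0 ≤ 1 - i := by linarith
        have w1 := mul_pos hcon (show 0 < -g1 by linarith)
        have w2 := mul_nonneg hk1 ha.le
        linarith
      rw [hh] at c4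
      have w1 : 1 * (m * s1 - 1) ≤ k * (m * s1 - 1) := mul_le_mul_of_nonneg_right hcon (by linarith)
      have w2 : 1 * (m * s0) ≤ (i - 1) * (m * s0) := mul_le_mul_of_nonneg_right (by linarith) hms0.le
      linarith

lemma conv3 (K : Set (ℝ × ℝ)) (hK : Convex ℝ K) (N E1 E2 v : ℝ × ℝ) (h0 : N ∈ K) (h1 : E1 ∈ K)
    (h2 : E2 ∈ K) (hT : 0 < crR N E1 E2) (v1 : 0 ≤ crR v E1 E2) (v2 : 0 ≤ crR N v E2)
    (v3 : 0 ≤ crR N E1 v) : v ∈ K := by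
  have hsum : crR v E1 E2 + crR N v E2 + crR N E1 v = crR N E1 E2 := by unfold crR; ring
  have : v = (crR v E1 E2 / crR N E1 E2) • N + (crR N v E2 / crR N E1 E2) • E1
      + (crR N E1 v / crR N E1 E2) • E2 := by
    have hT0 := hT.ne'
    ext
    · simp only [Prod.fst_add, Prod.smul_fst, smul_eq_mul]
      field_simp
      unfold crR; ring
    · simp only [Prod.snd_add, Prod.smul_snd, smul_eq_mul]
      field_simp
      unfold crR; ring
  rw [this]
  have := hK.sum_mem (t := (Finset.univ : Finset (Fin 3)))
    (w := ![crR v E1 E2 / crR N E1 E2, crR N v E2 / crR N E1 E2, crR N E1 v / crR N E1 E2])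
    (z := ![N, E1, E2]) ?_ ?_ ?_
  · simpa [Fin.sum_univ_three] using this
  · intro i _
    fin_cases i <;> simp <;> positivity
  · simp [Fin.sum_univ_three]
    rw [← add_div, ← add_div, hsum, div_self hT.ne']
  · intro i _
    fin_cases i
    · exact h0
    · exact h1
    · exact h2

lemma hull_lin (a b c : ℝ) (s : Set (ℝ × ℝ)) (h : ∀ v ∈ s, 0 ≤ a * v.1 + b * v.2 + c) :
    ∀ v ∈ convexHull ℝ s, 0 ≤ a * v.1 + b * v.2 + c := fun _ hv =>
  convexHull_min (t := {v : ℝ × ℝ | 0 ≤ a * v.1 + b * v.2 + c}) h (convex_halfplane a b c) hv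

/-- the nonnegative quadrant -/
def quadR : Set (ℝ × ℝ) := {v : ℝ × ℝ | 0 ≤ v.1 ∧ 0 ≤ v.2}

lemma convex_quadR : Convex ℝ quadR := by
  intro x hx y hy s t hs ht hst
  have h1 := hx.1
  have h2 := hx.2
  have h3 := hy.1
  have h4 := hy.2
  constructor
  · simp only [Prod.fst_add, Prod.smul_fst, smul_eq_mul]; positivity
  · simp only [Prod.snd_add, Prod.smul_snd, smul_eq_mul]; positivity

/-- geometric core: complement of `K + quadrant` in the quadrant -/
lemma core_area (p q : ℝ) (hp : 0 < p) (hq : 0 < q) (K : Set (ℝ × ℝ)) (hK : Convex ℝ K)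
    (hKm : MeasurableSet K) (hP : (0, q) ∈ K) (hQ : (p, 0) ∈ K)
    (hKT : ∀ v ∈ K, 0 ≤ v.1 ∧ 0 ≤ v.2 ∧ q * v.1 + p * v.2 ≤ p * q) (D : ℝ) (hD : 0 ≤ D)
    (hDp : D ≤ p * q) (hvol : volume K = ENNReal.ofReal (D / 2)) :
    (volume (quadR \ (K + quadR))).toReal = (p * q - D) / 2 := by
  set Tri : Set (ℝ × ℝ) := {v | 0 ≤ v.1 ∧ 0 ≤ v.2 ∧ q * v.1 + p * v.2 ≤ p * q} with hTri
  set Tr0 : Set (ℝ × ℝ) := {v | 0 < crR v (0, q) (p, 0) ∧ 0 ≤ crR (0, 0) v (p, 0) ∧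
    0 ≤ crR (0, 0) (0, q) v} with hTr0
  have hKsub : K ⊆ Tri := fun v hv => hKT v hv
  have habove : ∀ v : ℝ × ℝ, 0 ≤ v.1 → 0 ≤ v.2 → p * q ≤ q * v.1 + p * v.2 →
      (p * q / (q * v.1 + p * v.2)) • v ∈ segment ℝ ((0 : ℝ), q) (p, (0 : ℝ)) := by
    intro v h1 h2 h3
    have hpos : 0 < q * v.1 + p * v.2 := lt_of_lt_of_le (by positivity) h3
    refine ⟨p * v.2 / (q * v.1 + p * v.2), q * v.1 / (q * v.1 + p * v.2), by positivity,
      by positivity, ?_, ?_⟩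
    · rw [← add_div, add_comm, div_self hpos.ne']
    · ext
      · simp; field_simp
      · simp; field_simp
  have hseg : segment ℝ ((0 : ℝ), q) (p, (0 : ℝ)) ⊆ K := hK.segment_subset hP hQ
  have hEq : quadR \ (K + quadR) = Tri \ K := by
    ext v
    constructor
    · rintro ⟨⟨h1, h2⟩, h3⟩
      refine ⟨⟨h1, h2, ?_⟩, ?_⟩
      · by_contra hcon
        push Not at hcon
        apply h3
        have hpos : 0 < q * v.1 + p * v.2 := lt_trans (by positivity) hcon
        refine Set.mem_add.mpr ⟨_, hseg (habove v h1 h2 hcon.le),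
          (1 - p * q / (q * v.1 + p * v.2)) • v, ?_, ?_⟩
        · have : 0 ≤ 1 - p * q / (q * v.1 + p * v.2) := by
            rw [sub_nonneg, div_le_one hpos]; exact hcon.le
          exact ⟨by simp only [Prod.smul_fst, smul_eq_mul]; positivity,
            by simp only [Prod.smul_snd, smul_eq_mul]; positivity⟩
        · rw [← add_smul]; simp
      · intro hv
        exact h3 (Set.mem_add.mpr ⟨v, hv, 0, ⟨le_rfl, le_rfl⟩, add_zero v⟩)
    · rintro ⟨⟨h1, h2, h3⟩, h4⟩
      refine ⟨⟨h1, h2⟩, ?_⟩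
      intro hv
      obtain ⟨a, ha, w, ⟨hw1, hw2⟩, rfl⟩ := Set.mem_add.mp hv
      apply h4
      obtain ⟨a1, a2, a3⟩ := hKT a ha
      simp only [Prod.fst_add, Prod.snd_add] at h1 h2 h3
      have w1 : 0 ≤ q * w.1 := by positivity
      have w2 : 0 ≤ p * w.2 := by positivity
      rcases a3.lt_or_eq with hlt | heq
      · have hap : a.1 ≤ p := by
          have : 0 ≤ p * a.2 := by positivity
          by_contra hc
          push Not at hc
          have := mul_lt_mul_of_pos_left hc hq
          linarith
        have haq : a.2 ≤ q := by
          have : 0 ≤ q * a.1 := by positivity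
          by_contra hc
          push Not at hc
          have := mul_lt_mul_of_pos_left hc hp
          linarith
        apply conv3 K hK a (0, q) (p, 0) _ ha hP hQ
        · simp only [crR]; linarith
        · simp only [crR, Prod.fst_add, Prod.snd_add]; linarith
        · have := mul_nonneg a2 hw1
          have := mul_nonneg hw2 (sub_nonneg.mpr hap)
          simp only [crR, Prod.fst_add, Prod.snd_add]; linarith
        · have := mul_nonneg a1 hw2
          have := mul_nonneg hw1 (sub_nonneg.mpr haq)
          simp only [crR, Prod.fst_add, Prod.snd_add]; linarith
      · have z1 : q * w.1 = 0 := by linarith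
        have z2 : p * w.2 = 0 := by linarith
        have : w = 0 := by
          ext
          · simpa [hq.ne'] using z1
          · simpa [hp.ne'] using z2
        rw [this, add_zero]; exact ha
  have hvT : volume Tri = ENNReal.ofReal (p * q / 2) := by
    have hc : crR (0, 0) (0, q) (p, 0) = p * q := by simp [crR]; ring
    have h0 := vol_tri (0, 0) (0, q) (p, 0) (by rw [hc]; positivity)
    rw [hc] at h0
    apply le_antisymm
    · have hsub : Tri ⊆ Tr0 ∪ segment ℝ ((0 : ℝ), q) (p, (0 : ℝ)) := by
        rintro v ⟨h1, h2, h3⟩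
        rcases h3.lt_or_eq with h | h
        · left
          refine ⟨?_, ?_, ?_⟩
          · simp only [crR]; linarith
          · simp only [crR]
            have : 0 ≤ p * v.2 := by positivity
            linarith
          · simp only [crR]
            have : 0 ≤ q * v.1 := by positivity
            linarith
        · right
          have := habove v h1 h2 h.ge
          rwa [h, div_self (by positivity), one_smul] at this
      calc volume Tri ≤ _ := measure_mono hsub
        _ ≤ _ := measure_union_le _ _
        _ = _ := by rw [vol_segment, add_zero, h0]
    · rw [← h0]
      apply measure_mono
      rintro v ⟨h1, h2, h3⟩
      simp only [crR] at h1 h2 h3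
      refine ⟨?_, ?_, ?_⟩
      · exact nonneg_of_mul_nonneg_right (show 0 ≤ q * v.1 by linarith) hq
      · exact nonneg_of_mul_nonneg_right (show 0 ≤ p * v.2 by linarith) hp
      · linarith
  rw [hEq, measure_diff hKsub hKm.nullMeasurableSet (by rw [hvol]; exact ENNReal.ofReal_ne_top), hvT,
    hvol, ← ENNReal.ofReal_sub _ (by positivity), ENNReal.toReal_ofReal (by linarith)]
  ring

lemma final (p q q' : ℕ) (hp : 1 ≤ p) (hq' : 1 ≤ q') (hqq : q' ≤ q) (S : Finset (ℤ × ℤ)) (D : ℤ)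
    (hD : 0 ≤ D) (hDp : D ≤ p * q') (h : HullD (0, (q' : ℤ)) ((p : ℤ), 0) S D)
    (hS2 : ∀ v ∈ S, 1 ≤ v.2) :
    Attainable {(p, 0), (0, q)} (((p : ℤ) - 1) * ((q' : ℤ) - 1) - D) := by
  obtain ⟨hS, hvol⟩ := h
  refine ⟨insert (0, q') (S.image fun v => (v.1.toNat, v.2.toNat)), ?_⟩
  set T : Finset (ℕ × ℕ) := {(p, 0), (0, q)} ∪ insert (0, q') (S.image fun v => (v.1.toNat, v.2.toNat))
    with hT
  set K := convexHull ℝ (ptsZ (0, (q' : ℤ)) ((p : ℤ), 0) S) with hKdef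
  have hp' : (1 : ℝ) ≤ p := by exact_mod_cast hp
  have hq1 : (1 : ℝ) ≤ q' := by exact_mod_cast hq'
  have hqqR : (q' : ℝ) ≤ q := by exact_mod_cast hqq
  have hK : Convex ℝ K := convex_convexHull ℝ _
  have hP : ((0 : ℝ), (q' : ℝ)) ∈ K := subset_convexHull ℝ _ ⟨(0, (q' : ℤ)), by simp, by simp [iR]⟩
  have hQ : ((p : ℝ), (0 : ℝ)) ∈ K := subset_convexHull ℝ _ ⟨((p : ℤ), 0), by simp, by simp [iR]⟩
  have hlin : ∀ a b c : ℝ, 0 ≤ b * q' + c → 0 ≤ a * p + c →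
      (∀ v ∈ S, 0 ≤ a * (v.1 : ℝ) + b * (v.2 : ℝ) + c) → ∀ v ∈ K, 0 ≤ a * v.1 + b * v.2 + c := by
    intro a b c h1 h2 h3
    apply hull_lin
    rintro _ ⟨w, hw, rfl⟩
    rcases hw with rfl | rfl | hw
    · simpa [iR] using h1
    · simpa [iR] using h2
    · exact h3 w hw
  have hSR : ∀ v ∈ S, (1 : ℝ) ≤ v.1 ∧ (1 : ℝ) ≤ v.2 ∧ q' * (v.1 : ℝ) + p * v.2 ≤ p * q' := by
    intro v hv
    obtain ⟨a1, a2, a3, a4⟩ := hS v hv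
    refine ⟨by exact_mod_cast a1, by exact_mod_cast hS2 v hv, ?_⟩
    have : (q' : ℤ) * v.1 + p * v.2 ≤ p * q' := by
      simp only [crZ] at a3; linarith
    exact_mod_cast this
  have hKT : ∀ v ∈ K, 0 ≤ v.1 ∧ 0 ≤ v.2 ∧ q' * v.1 + p * v.2 ≤ p * q' := by
    intro v hv
    have k1 := hlin 1 0 0 (by simp) (by simp) (fun v hv => by linarith [(hSR v hv).1]) v hv
    have k2 := hlin 0 1 0 (by simp) (by simp) (fun v hv => by linarith [(hSR v hv).2.1]) v hv
    have k3 := hlin (-q') (-p) (p * q') (by linarith) (by linarith)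
      (fun v hv => by linarith [(hSR v hv).2.2]) v hv
    exact ⟨by linarith, by linarith, by linarith⟩
  have hKm : MeasurableSet K := by
    apply IsClosed.measurableSet
    apply Set.Finite.isClosed_convexHull
    apply Set.Finite.image
    apply (Finset.finite_toSet (insert (0, (q' : ℤ)) (insert ((p : ℤ), 0) S))).subset
    intro v hv
    simpa using hv
  have hG : GammaPlus T = K + quadR := by
    unfold GammaPlus
    change convexHull ℝ _ + quadR = _
    apply subset_antisymm
    · have h1 : convexHull ℝ ((fun v : ℕ × ℕ => ((v.1 : ℝ), (v.2 : ℝ))) '' (T : Set (ℕ × ℕ))) ⊆ K + quadR := by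
        apply convexHull_min _ (hK.add convex_quadR)
        have hz : ∀ v ∈ K, v ∈ K + quadR := fun v hv =>
          Set.mem_add.mpr ⟨v, hv, 0, ⟨le_rfl, le_rfl⟩, add_zero v⟩
        rintro _ ⟨w, hw, rfl⟩
        simp only [hT, Finset.coe_union, Finset.coe_insert, Finset.coe_singleton, Finset.coe_image,
          Set.mem_union, Set.mem_insert_iff, Set.mem_singleton_iff, Set.mem_image, Finset.mem_coe] at hw
        rcases hw with (rfl | rfl) | rfl | ⟨v, hv, rfl⟩
        · apply hz; simpa using hQ
        · refine Set.mem_add.mpr ⟨_, hP, (0, (q : ℝ) - q'), ⟨le_rfl, ?_⟩, ?_⟩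
          · simpa using hqqR
          · simp
        · apply hz; simpa using hP
        · apply hz
          apply subset_convexHull
          refine ⟨v, by simp [hv], ?_⟩
          have e1 : ((v.1.toNat : ℤ)) = v.1 := Int.toNat_of_nonneg (by
            have := (hS v hv).1; simp only at this; linarith)
          have e2 : ((v.2.toNat : ℤ)) = v.2 := Int.toNat_of_nonneg (by linarith [hS2 v hv])
          ext
          · simp only [iR]; exact_mod_cast e1.symm
          · simp only [iR]; exact_mod_cast e2.symm
      intro x hx
      obtain ⟨a, ha, w, hw, rfl⟩ := Set.mem_add.mp hx
      obtain ⟨b, hb, w', hw', rfl⟩ := Set.mem_add.mp (h1 ha)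
      rw [add_assoc]
      exact Set.mem_add.mpr ⟨b, hb, w' + w, ⟨add_nonneg hw'.1 hw.1, add_nonneg hw'.2 hw.2⟩, rfl⟩
    · apply Set.add_subset_add_right
      apply convexHull_mono
      rintro _ ⟨w, hw, rfl⟩
      rcases hw with rfl | rfl | hw
      · exact ⟨(0, q'), by simp [hT], by simp [iR]⟩
      · exact ⟨(p, 0), by simp [hT], by simp [iR]⟩
      · refine ⟨(w.1.toNat, w.2.toNat), ?_, ?_⟩
        · simp only [hT, Finset.coe_union, Finset.coe_insert, Finset.coe_singleton, Finset.coe_image]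
          right; right
          exact ⟨w, hw, rfl⟩
        · have e1 : ((w.1.toNat : ℤ)) = w.1 := Int.toNat_of_nonneg (by
            have := (hS w hw).1; simp only at this; linarith)
          have e2 : ((w.2.toNat : ℤ)) = w.2 := Int.toNat_of_nonneg (by linarith [hS2 w hw])
          ext
          · simp only [iR]; exact_mod_cast e1
          · simp only [iR]; exact_mod_cast e2
  have hA : axisA T = p := by
    unfold axisA
    apply IsLeast.csInf_eq
    rw [hG]
    refine ⟨Set.mem_add.mpr ⟨_, hQ, 0, ⟨le_rfl, le_rfl⟩, add_zero _⟩, ?_⟩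
    intro x hx
    obtain ⟨a, ha, w, ⟨hw1, hw2⟩, hx⟩ := Set.mem_add.mp hx
    have x1 := congrArg Prod.fst hx
    have x2 := congrArg Prod.snd hx
    simp only [Prod.fst_add, Prod.snd_add] at x1 x2
    have k1 := hlin 1 p (-p) (by nlinarith) (by linarith) (fun v hv => by
      obtain ⟨b1, b2, _⟩ := hSR v hv
      nlinarith) a ha
    have k2 := (hKT a ha).2.1
    have : a.2 = 0 := by linarith
    rw [this] at k1
    linarith
  have hB : axisB T = q' := by
    unfold axisB
    apply IsLeast.csInf_eq
    rw [hG]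
    refine ⟨Set.mem_add.mpr ⟨_, hP, 0, ⟨le_rfl, le_rfl⟩, add_zero _⟩, ?_⟩
    intro x hx
    obtain ⟨a, ha, w, ⟨hw1, hw2⟩, hx⟩ := Set.mem_add.mp hx
    have x1 := congrArg Prod.fst hx
    have x2 := congrArg Prod.snd hx
    simp only [Prod.fst_add, Prod.snd_add] at x1 x2
    have k1 := hlin q' 1 (-q') (by linarith) (by nlinarith) (fun v hv => by
      obtain ⟨b1, b2, _⟩ := hSR v hv
      nlinarith) a ha
    have k2 := (hKT a ha).1
    have : a.1 = 0 := by linarith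
    rw [this] at k1
    linarith
  have hArea : areaS T = (p * q' - D) / 2 := by
    unfold areaS
    rw [hG]
    exact core_area p q' (by linarith) (by linarith) K hK hKm hP hQ hKT D (by exact_mod_cast hD)
      (by exact_mod_cast hDp) hvol
  unfold newtonNumber
  rw [hA, hB, hArea]
  push_cast
  ring

lemma y_pos (p q' D : ℤ) (hDq : D < q') (hq0 : 0 ≤ q') (hp : 0 < p) (v : ℤ × ℤ) (hv : v.1 < p)
    (h : crZ (0, q') (p, 0) v ≤ D) : 1 ≤ v.2 := by
  by_contra hcon
  have h2 : 0 ≤ -v.2 := by linarith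
  have h3 := mul_nonneg hp.le h2
  have h4 : 0 ≤ q' * (p - v.1 - 1) := mul_nonneg hq0 (by linarith)
  simp only [crZ] at h
  linarith

lemma caseA (p q k r1 : ℕ) (hp : 4 < p) (hk : 1 ≤ k) (hr1 : 1 ≤ r1)
    (hq : k * p + r1 ≤ q) (D : ℤ) (hD0 : 0 ≤ D) (hD : D ≤ p - 1)
    (hg : D = 0 ∨ (Nat.gcd p r1 : ℤ) ≤ D) :
    Attainable {(p, 0), (0, q)} (((p : ℤ) - 1) * ((k * p + r1 : ℕ) - 1) - D) := by
  have hkp : p ≤ k * p := Nat.le_mul_of_pos_left p hk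
  have hgcd : (Int.gcd ((p : ℤ) - 0) (0 - ((k * p + r1 : ℕ) : ℤ))) = Nat.gcd p r1 := by
    rw [sub_zero, zero_sub, Int.gcd_neg, Int.gcd_natCast_natCast]
    simp
  have hpz : (4 : ℤ) < p := by exact_mod_cast hp
  have hqz : (p : ℤ) + 1 ≤ ((k * p + r1 : ℕ) : ℤ) := by exact_mod_cast (by omega : p + 1 ≤ k * p + r1)
  obtain ⟨S, hS⟩ := strip D.toNat D (0, ((k * p + r1 : ℕ) : ℤ)) ((p : ℤ), 0) (Int.self_le_toNat D)
    (by simp only; linarith) hD0 (by simp only; rw [hgcd]; exact hg) (by simp only; linarith)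
  refine final p q (k * p + r1) (by omega) (by omega) hq S D hD0 ?_ hS ?_
  · nlinarith
  · intro v hv
    exact y_pos p _ D (by linarith) (by linarith) (by linarith) v (hS.1 v hv).2.1 (hS.1 v hv).2.2.2

lemma caseB (p q k r2 : ℕ) (hp : 4 < p) (hk : 1 ≤ k) (hr2 : r2 + 2 ≤ p)
    (hq : k * p + r2 ≤ q) (D : ℤ) (hD0 : 0 < D) (hD : D + 2 ≤ r2) :
    Attainable {(p, 0), (0, q)} (((p : ℤ) - 1) * ((k * p + r2 : ℕ) - 1) - (D + p - 1)) := by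
  have hkp : p ≤ k * p := Nat.le_mul_of_pos_left p hk
  have hpz : (4 : ℤ) < p := by exact_mod_cast hp
  have hr2z : (r2 : ℤ) + 2 ≤ p := by exact_mod_cast hr2
  have hqz : (p : ℤ) + r2 ≤ ((k * p + r2 : ℕ) : ℤ) := by exact_mod_cast (by omega : p + r2 ≤ k * p + r2)
  obtain ⟨q', hq'⟩ : ∃ q' : ℤ, q' = ((k * p + r2 : ℕ) : ℤ) := ⟨_, rfl⟩
  have hq'' : q' = (k : ℤ) * p + r2 := by rw [hq']; push_cast; ring
  rw [← hq'] at hqz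
  have hg : (Int.gcd ((p : ℤ) - 1 - 0) ((k : ℤ) - q') : ℤ) ≤ p - 1 - r2 := by
    have d1 := Int.gcd_dvd_left ((p : ℤ) - 1 - 0) ((k : ℤ) - q')
    have d2 := Int.gcd_dvd_right ((p : ℤ) - 1 - 0) ((k : ℤ) - q')
    apply Int.le_of_dvd (by linarith)
    have := dvd_add d2 (d1.mul_left ((k : ℤ) + 1))
    have hE : (p : ℤ) - 1 - r2 = (k : ℤ) - q' + ((k : ℤ) + 1) * ((p : ℤ) - 1 - 0) := by
      rw [hq'']; ring
    rw [hE]; exact this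
  obtain ⟨S, hS⟩ := strip (D + p - 1 - r2).toNat (D + p - 1 - r2) (0, q') ((p : ℤ) - 1, (k : ℤ))
    (Int.self_le_toNat _) (by simp only; linarith) (by linarith)
    (by right; simp only; linarith) (by simp only; linarith)
  have hglue := glue_right (0, q') ((p : ℤ) - 1, (k : ℤ)) ((p : ℤ), 0) S (D + p - 1 - r2) r2
    (by linarith) hS (by simp only; linarith) (by simp only; linarith)
    (by simp only [crZ]; rw [hq'']; ring) (by linarith) (by
      rintro ⟨v1, v2⟩ hv
      obtain ⟨c1, c2, c3, c4⟩ := hS.1 _ hv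
      by_contra hcon
      push Not at hcon
      simp only at c1 c2
      obtain ⟨j, hj⟩ : ∃ j, j = (k : ℤ) * (p - v1) - v2 := ⟨_, rfl⟩
      have hj1 : crZ ((p : ℤ) - 1, (k : ℤ)) ((p : ℤ), 0) (v1, v2) = j := by
        simp only [crZ]; rw [hj]; ring
      rw [hj1] at hcon
      have hh : crZ (0, q') ((p : ℤ) - 1, (k : ℤ)) (v1, v2) = r2 * (p - 1 - v1) + (p - 1) * j := by
        simp only [crZ]; rw [hq'', hj]; ring
      rw [hh] at c4
      have w1 : (0 : ℤ) ≤ r2 * (p - 1 - v1) := mul_nonneg (by linarith) (by linarith)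
      have w2 : ((p : ℤ) - 1) * 1 ≤ (p - 1) * j := mul_le_mul_of_nonneg_left hcon (by linarith)
      linarith)
  rw [sub_add_cancel] at hglue
  have hDq : D + p - 1 < q' := by linarith
  rw [← hq']
  subst hq'
  refine final p q (k * p + r2) (by omega) (by omega) hq _ (D + p - 1) (by linarith) ?_ hglue ?_
  · nlinarith
  · intro v hv
    exact y_pos p _ _ hDq (by linarith) (by linarith) v (hglue.1 v hv).2.1 (hglue.1 v hv).2.2.2

/-- attainable Newton numbers between `ν(tr(p,kp))` and
`ν(tr(p,q))` for `4 < p ≤ q`, `p ∤ q`. -/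
theorem stmt_4 (p q k r m : ℕ) (ν : ℤ)
    (hp : 4 < p) (hpq : p ≤ q) (hnd : ¬ p ∣ q)
    (hr0 : 0 < r) (hrp : r < p) (hq : q = k * p + r)
    (hm : m = Nat.gcd p q)
    (hν : ν = ((p : ℤ) - 1) * ((q : ℤ) - 1))
    (n : ℤ) (hn1 : ((p : ℤ) - 1) * ((k : ℤ) * p - 1) ≤ n) (hn2 : n ≤ ν)
    (e1 : ¬ ((¬ Even p ∨ r ≠ p - 1) ∧ ν - m < n ∧ n < ν))
    (e2 : ¬ (Even p ∧ r = p - 1 ∧ n = ν - p)) :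
    Attainable {(p, 0), (0, q)} n := by 
  have hk : 1 ≤ k := by
    rcases Nat.eq_zero_or_pos k with h | h
    · subst h; omega
    · exact h
  have hpz : (4 : ℤ) < p := by exact_mod_cast hp
  have hqz : (q : ℤ) = k * p + r := by exact_mod_cast hq
  have hmg : m = Nat.gcd p r := by rw [hm, hq]; simp
  obtain ⟨N, hN⟩ : ∃ N, N = n - ((p : ℤ) - 1) * ((k : ℤ) * p - 1) := ⟨_, rfl⟩
  have hN0 : 0 ≤ N := by linarith
  have hNr : N ≤ ((p : ℤ) - 1) * r := by
    rw [hν, hqz] at hn2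
    linarith
  have hp1 : (0 : ℤ) < p - 1 := by linarith
  obtain ⟨r1, D0, hr1, hr1r, hD0, hD0p, hND⟩ : ∃ (r1 : ℕ) (D0 : ℤ), 1 ≤ r1 ∧ r1 ≤ r ∧ 0 ≤ D0 ∧
      D0 ≤ p - 1 ∧ N = ((p : ℤ) - 1) * r1 - D0 := by
    rcases hN0.lt_or_eq with h | h
    · have hm1 := Int.emod_add_mul_ediv (N - 1) ((p : ℤ) - 1)
      have hm2 := Int.emod_nonneg (N - 1) hp1.ne'
      have hm3 := Int.emod_lt_of_pos (N - 1) hp1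
      have hz0 : 0 ≤ (N - 1) / ((p : ℤ) - 1) := Int.ediv_nonneg (by linarith) hp1.le
      have hzr : (N - 1) / ((p : ℤ) - 1) < r := by
        rw [Int.ediv_lt_iff_lt_mul hp1]; linarith
      obtain ⟨z, hz⟩ : ∃ z : ℕ, (z : ℤ) = (N - 1) / ((p : ℤ) - 1) :=
        ⟨_, Int.toNat_of_nonneg hz0⟩
      rw [← hz] at hm1 hzr
      refine ⟨z + 1, ((p : ℤ) - 1) * (z + 1) - N, by omega, by omega, by linarith, by linarith, ?_⟩
      push_cast; ring
    · exact ⟨1, p - 1, le_rfl, hr0, hp1.le, le_rfl, by rw [← h]; push_cast; ring⟩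
  have hr1z : (r1 : ℤ) ≤ r := by exact_mod_cast hr1r
  by_cases hg : D0 = 0 ∨ (Nat.gcd p r1 : ℤ) ≤ D0
  · have := caseA p q k r1 hp hk hr1 (by omega) D0 hD0 hD0p hg
    have hE : n = ((p : ℤ) - 1) * ((k * p + r1 : ℕ) - 1) - D0 := by
      push_cast; linarith
    rw [hE]; exact this
  · push Not at hg
    obtain ⟨hg1, hg2⟩ := hg
    have hDpos : 0 < D0 := lt_of_le_of_ne hD0 (Ne.symm hg1)
    rcases hr1r.lt_or_eq with hlt | heq
    · by_cases hr2 : r1 + 1 + 2 ≤ p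
      · have hgr : Nat.gcd p r1 ≤ r1 := Nat.gcd_le_right _ hr1
        have hgrz : (Nat.gcd p r1 : ℤ) ≤ r1 := by exact_mod_cast hgr
        have := caseB p q k (r1 + 1) hp hk hr2 (by omega) D0 hDpos (by push_cast; linarith)
        have hE : n = ((p : ℤ) - 1) * ((k * p + (r1 + 1) : ℕ) - 1) - (D0 + p - 1) := by
          push_cast; linarith
        rw [hE]; exact this
      · exfalso
        have hrp1 : r = p - 1 := by omega
        have hr12 : p = r1 + 2 := by omega
        have hd1 : Nat.gcd p r1 ∣ 2 := by
          have h1 := Nat.gcd_dvd_left p r1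
          have h2 := Nat.gcd_dvd_right p r1
          have h3 := Nat.dvd_sub h1 h2
          have h4 : p - r1 = 2 := by omega
          rwa [h4] at h3
        have hle := Nat.le_of_dvd (by norm_num) hd1
        have hlez : (Nat.gcd p r1 : ℤ) ≤ 2 := by exact_mod_cast hle
        have hD1 : D0 = 1 := by linarith
        have hg2' : Nat.gcd p r1 = 2 := by
          rw [hD1] at hg2
          have : 1 < Nat.gcd p r1 := by exact_mod_cast hg2
          omega
        have hev : Even p := by
          rw [even_iff_two_dvd, ← hg2']
          exact Nat.gcd_dvd_left p r1
        refine e2 ⟨hev, hrp1, ?_⟩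
        have hrz : (r : ℤ) = r1 + 1 := by exact_mod_cast (by omega : r = r1 + 1)
        rw [hν, hqz, hrz]
        rw [hD1] at hND
        linarith
    · exfalso
      subst heq
      rw [← hmg] at hg2
      have hnn : n = ν - D0 := by
        rw [hν, hqz]; linarith
      by_cases hcase : ¬ Even p ∨ r1 ≠ p - 1
      · exact e1 ⟨hcase, by linarith, by linarith⟩
      · push Not at hcase
        have : Nat.gcd p r1 = 1 := by
          rw [hcase.2]
          have h1 := Nat.gcd_dvd_left p (p - 1)
          have h2 := Nat.gcd_dvd_right p (p - 1)
          have h3 := Nat.dvd_sub h1 h2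
          have h4 : p - (p - 1) = 1 := by omega
          rw [h4] at h3
          exact Nat.dvd_one.mp h3
        rw [hmg, this] at hg2
        push_cast at hg2
        linarith
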